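/- arXiv:1111.3095 — 2 statements merged into one kernel-verified Lean document; each statement's English description precedes it below -/
import Mathlib

section
/- Let 0 ≠ f ∈ L²(μ). Then for all but countably many α ∈ ℝ, the function f_α = V_α f satisfies f_α(t) ≠ 0 for (μ_α)_ac-almost every t ∈ ℝ (for any Borel representative of f_α); that is, the set {α ∈ ℝ : (μ_α)_ac({t ∈ ℝ : f_α(t) = 0}) > 0} is countable. -/
/-!
For `γ ∈ ℝ` write `f_γ = V γ f`, `F_γ` for the Stieltjes transform of `μm γ` and `K_γ` for that of
`f_γ μm γ`. Let `B γ` be the set where `f_γ` vanishes and `μm γ` has nonzero density. The set in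
question is `{γ | 0 < volume (B γ)}`, so it is enough that `B α ∩ B β` is a null set whenever
`α ≠ β`.

The resolvent identity for the rank-one perturbation gives, with `W = 1 + (β - α) F_α`,
`K_β W = K_α` and `F_β W = F_α` (`integral_resolvent_perturbation`, `stieltjes_perturbation`).
At almost every `x ∈ B α ∩ B β`, as `z → x` in a cone, `Im F_α` and `Im F_β` are bounded and bounded
away from zero, while the jumps `K_γ(z) - K_γ(conj z)`, being Poisson integrals of `f_γ μm γ` up to
a constant, tend to zero for `γ = α, β` (`eventually_poisson_le`, `eventually_le_poisson`,
`tendsto_sub_conj`). Comparing the two jumps through `W` shows that `K_α(z) → 0`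
(`tendsto_zero_of_identities`).

If `B α ∩ B β` has positive measure, the boundary uniqueness theorem forces `K_α = 0`, so that
`f_α = 0` (`ae_eq_zero_of_tendsto`) and `f = 0`. Boundary uniqueness is proved for bounded
functions on the disk by Jensen's formula and Fatou's lemma (`eq_zero_of_radial_limits`), moved to
the half-plane by Cayley transforms, and extended to Stieltjes transforms of positive measures, which
have nonnegative imaginary part (`stieltjes_eq_of_cone_limits`).
-/

open MeasureTheory Complex Set

local notation "⟪" x ", " y "⟫" => @inner ℂ _ _ x y

section Auxiliary

open Filter Topology Metric
open scoped ComplexConjugate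

/-! ### Boundary uniqueness for bounded holomorphic functions -/

/-- Boundary uniqueness on the disk. If `g 0 ≠ 0`, Jensen's formula bounds the integrals of
`-log ‖g‖` over the circles of radius `r n` by `-2π log ‖g 0‖`, so by Fatou's lemma
`liminf (-log ‖g‖)` is finite for almost every angle, which is incompatible with the radial limit
`0` on a set of positive measure. The set `T` need not be measurable. -/
lemma eq_zero_of_radial_limits {g : ℂ → ℂ} (hg : DifferentiableOn ℂ g (ball 0 1))
    (hb : ∀ w ∈ ball (0 : ℂ) 1, ‖g w‖ ≤ 1) {r : ℕ → ℝ} (hr : ∀ n, 0 < r n ∧ r n < 1)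
    {T : Set ℝ} (hT : T ⊆ Ioc 0 (2 * Real.pi)) (hT0 : volume T ≠ 0)
    (hlim : ∀ θ ∈ T, Tendsto (fun n => g (circleMap 0 (r n) θ)) atTop (𝓝 0)) : g 0 = 0 := by
  by_contra h0
  have han : AnalyticOnNhd ℂ g (ball 0 1) := hg.analyticOnNhd isOpen_ball
  have hsub : ∀ n, closedBall (0 : ℂ) |r n| ⊆ ball 0 1 := fun n =>
    closedBall_subset_ball (by rw [abs_of_pos (hr n).1]; exact (hr n).2)
  have hcm : ∀ n θ, circleMap 0 (r n) θ ∈ ball (0 : ℂ) 1 := fun n θ => by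
    apply hsub n
    simp [abs_of_pos (hr n).1]
  have hlog : ∀ n θ, 0 ≤ -Real.log ‖g (circleMap 0 (r n) θ)‖ := fun n θ => by
    have := Real.log_nonpos (norm_nonneg _) (hb _ (hcm n θ))
    linarith
  set M : ℝ := 2 * Real.pi * (-Real.log ‖g 0‖) with hM
  set u : ℕ → ℝ → ENNReal := fun n θ => ENNReal.ofReal (-Real.log ‖g (circleMap 0 (r n) θ)‖) with hu
  have hint : ∀ n, ∫⁻ θ in Ioc 0 (2 * Real.pi), u n θ ≤ ENNReal.ofReal M := by
    intro n
    have hcont : AnalyticOnNhd ℂ g (closedBall 0 |r n|) := han.mono (hsub n)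
    have hci : CircleIntegrable (fun w => Real.log ‖g w‖) 0 (r n) :=
      (hcont.mono sphere_subset_closedBall).meromorphicOn.circleIntegrable_log_norm
    have hJ := hcont.circleAverage_log_norm (hr n).1.ne' h0
    have hnn : 0 ≤ ∑ᶠ v, (MeromorphicOn.divisor g (closedBall 0 |r n|) v : ℝ)
        * Real.log (r n * ‖0 - v‖⁻¹) := by
      apply finsum_nonneg
      intro v
      by_cases hv : v ∈ closedBall (0 : ℂ) |r n|
      · apply mul_nonneg
        · exact_mod_cast (MeromorphicOn.AnalyticOnNhd.divisor_nonneg hcont) v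
        · have hv' : ‖v‖ ≤ r n := by simpa [abs_of_pos (hr n).1] using hv
          rcases eq_or_ne v 0 with rfl | hv0
          · simp
          · apply Real.log_nonneg
            rw [zero_sub, norm_neg, ← div_eq_mul_inv, one_le_div (norm_pos_iff.2 hv0)]
            exact hv'
      · rw [Function.locallyFinsuppWithin.apply_eq_zero_of_notMem _ hv]; simp
    have hle : Real.log ‖g 0‖ ≤ Real.circleAverage (fun w => Real.log ‖g w‖) 0 (r n) := by
      rw [hJ]; linarith
    rw [Real.circleAverage_def, smul_eq_mul, inv_mul_eq_div,
      le_div_iff₀ (by positivity), intervalIntegral.integral_of_le (by positivity)] at hle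
    have hI : Integrable (fun θ => Real.log ‖g (circleMap 0 (r n) θ)‖)
        (volume.restrict (Ioc 0 (2 * Real.pi))) := by
      have := hci
      rwa [CircleIntegrable, intervalIntegrable_iff_integrableOn_Ioc_of_le (by positivity)] at this
    rw [← ofReal_integral_eq_lintegral_ofReal (f := fun θ => -Real.log ‖g (circleMap 0 (r n) θ)‖)
      hI.neg (ae_of_all _ (hlog n))]
    apply ENNReal.ofReal_le_ofReal
    rw [integral_neg]
    linarith
  have hmeas : ∀ n, Measurable (u n) := by
    intro n
    have : Continuous fun θ => g (circleMap 0 (r n) θ) :=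
      hg.continuousOn.comp_continuous (continuous_circleMap _ _) (hcm n)
    exact (Real.measurable_log.comp this.norm.measurable).neg.ennreal_ofReal
  have hfatou : ∫⁻ θ in Ioc 0 (2 * Real.pi), liminf (fun n => u n θ) atTop ≤ ENNReal.ofReal M := by
    refine (lintegral_liminf_le hmeas).trans ?_
    refine liminf_le_of_le (by isBoundedDefault) fun b hb => ?_
    obtain ⟨n, hn⟩ := hb.exists
    exact hn.trans (hint n)
  have hfin : ∀ᵐ θ ∂(volume.restrict (Ioc 0 (2 * Real.pi))), liminf (fun n => u n θ) atTop < ⊤ :=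
    ae_lt_top (Measurable.liminf hmeas) (hfatou.trans_lt ENNReal.ofReal_lt_top).ne
  have hne : ∀ᵐ θ : ℝ, ∀ n, g (circleMap 0 (r n) θ) ≠ 0 := by
    rw [ae_all_iff]
    intro n
    have h1 : g ⁻¹' {0}ᶜ ∈ codiscreteWithin (ball (0 : ℂ) 1) :=
      han.preimage_zero_mem_codiscreteWithin h0 (by simp)
        ((convex_ball (0 : ℂ) 1).isConnected ⟨0, by simp⟩)
    have h2 : g ⁻¹' {0}ᶜ ∈ codiscreteWithin (sphere (0 : ℂ) |r n|) :=
      codiscreteWithin_mono (sphere_subset_closedBall.trans (hsub n)) h1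
    have h3 := circleMap_preimage_codiscrete (c := 0) (hr n).1.ne' h2
    have := ae_restrict_le_codiscreteWithin (μ := volume) MeasurableSet.univ h3
    rw [Measure.restrict_univ] at this
    exact this
  apply hT0
  have hnull : ∀ᵐ θ : ℝ, θ ∉ T := by
    rw [ae_restrict_iff' measurableSet_Ioc] at hfin
    filter_upwards [hfin, hne] with θ h1 h2 hθ
    have h3 : Tendsto (fun n => u n θ) atTop (𝓝 ⊤) := by
      apply ENNReal.tendsto_ofReal_atTop.comp
      apply tendsto_neg_atBot_atTop.comp
      apply Real.tendsto_log_nhdsGT_zero.comp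
      rw [tendsto_nhdsWithin_iff]
      exact ⟨by simpa using (hlim θ hθ).norm, Eventually.of_forall fun n => norm_pos_iff.2 (h2 n)⟩
    exact (h1 (hT hθ)).ne h3.liminf_eq
  rw [ae_iff] at hnull
  simpa using hnull

/-- The cone (Stolz angle) in the upper half-plane with vertex `x`. Its aperture is chosen so that it
eventually contains the images of the radii of the disk under Cayley transforms; boundary limits at
`x` are taken along `𝓝[cone x] x`. -/
def cone (x : ℝ) : Set ℂ := {z | 0 < z.im ∧ ‖z - x‖ ≤ 2 * z.im}

/-- The Cayley transform of the disk onto the upper half-plane sending `0` to `x₀ + i y₀` maps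
the radius of angle `θ` to a curve that ends at a boundary point and finally lies in the cone with
vertex at that point. -/
lemma cayley_tendsto (x₀ y₀ : ℝ) (hy : 0 < y₀) (θ : ℝ) (hθ : θ ∈ Ioo 0 (2 * Real.pi)) {r : ℕ → ℝ}
    (hr : ∀ n, 0 < r n ∧ r n < 1) (hr1 : Tendsto r atTop (𝓝 1)) :
    Tendsto (fun n => (x₀ : ℂ) + y₀ * (I * (1 + circleMap 0 (r n) θ) / (1 - circleMap 0 (r n) θ)))
      atTop (𝓝[cone (x₀ + y₀ * Real.tan ((θ - Real.pi) / 2))]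
        ((x₀ + y₀ * Real.tan ((θ - Real.pi) / 2) : ℝ) : ℂ)) := by
  set a := (θ - Real.pi) / 2 with ha
  have hcos : 0 < Real.cos a := Real.cos_pos_of_mem_Ioo
    ⟨by rw [ha]; linarith [hθ.1], by rw [ha]; linarith [hθ.2]⟩
  set e : ℂ := exp (θ * I) with he
  have hea : e = -(Real.cos a + Real.sin a * I) ^ 2 := by
    have : (θ : ℂ) * I = a * I + a * I + Real.pi * I := by
      rw [ha]; push_cast; ring
    rw [he, this, exp_add, exp_add, exp_pi_mul_I, exp_mul_I]
    push_cast; ring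
  have hsc : (Real.cos a : ℂ) ^ 2 + (Real.sin a : ℂ) ^ 2 = 1 := by
    exact_mod_cast Real.cos_sq_add_sin_sq a
  have hcs0 : (Real.cos a + Real.sin a * I : ℂ) ≠ 0 := by
    intro h
    have := congrArg re h
    simp [-ofReal_cos, -ofReal_sin] at this
    exact hcos.ne' this
  have hc0 : (Real.cos a : ℂ) ≠ 0 := by exact_mod_cast hcos.ne'
  have h1e : 1 - e = 2 * Real.cos a * (Real.cos a + Real.sin a * I) := by
    rw [hea]
    linear_combination (-1 : ℂ) * hsc + (Real.sin a : ℂ) ^ 2 * I_sq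
  have h1e' : 1 + e = -2 * I * Real.sin a * (Real.cos a + Real.sin a * I) := by
    rw [hea]
    linear_combination (-1 : ℂ) * hsc + (Real.sin a : ℂ) ^ 2 * I_sq
  have hprod : 2 * (Real.cos a : ℂ) * (Real.cos a + Real.sin a * I) ≠ 0 :=
    mul_ne_zero (mul_ne_zero two_ne_zero hc0) hcs0
  have h1e0 : 1 - e ≠ 0 := by rw [h1e]; exact hprod
  have hnorm : ‖e‖ = 1 := by rw [he]; exact norm_exp_ofReal_mul_I θ
  have hval : I * (1 + e) / (1 - e) = (Real.tan a : ℂ) := by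
    rw [h1e, h1e', Real.tan_eq_sin_div_cos]
    push_cast [-ofReal_cos, -ofReal_sin]
    rw [div_eq_div_iff hprod hc0]
    linear_combination (-2 * Real.sin a * (Real.cos a + Real.sin a * I) * Real.cos a : ℂ) * I_sq
  have hcirc : ∀ n, circleMap 0 (r n) θ = r n * e := fun n => by simp [circleMap, he]
  have hlim : Tendsto (fun n => (r n : ℂ) * e) atTop (𝓝 e) := by
    have : Tendsto (fun n => (r n : ℂ)) atTop (𝓝 1) := by
      exact_mod_cast (continuous_ofReal.tendsto (1 : ℝ)).comp hr1
    simpa using this.mul_const e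
  simp only [hcirc]
  have hden : ∀ n, 1 - (r n : ℂ) * e ≠ 0 := by
    intro n h
    have : ‖(r n : ℂ) * e‖ = 1 := by rw [← sub_eq_zero.1 h]; simp
    rw [norm_mul, hnorm, mul_one, norm_real, Real.norm_of_nonneg (hr n).1.le] at this
    exact (hr n).2.ne this
  have htgt : ((x₀ + y₀ * Real.tan a : ℝ) : ℂ) = x₀ + y₀ * (I * (1 + e) / (1 - e)) := by
    rw [hval]; push_cast; ring
  rw [tendsto_nhdsWithin_iff]
  constructor
  · rw [htgt]
    exact tendsto_const_nhds.add (tendsto_const_nhds.mul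
      ((tendsto_const_nhds.mul (tendsto_const_nhds.add hlim)).div (tendsto_const_nhds.sub hlim) h1e0))
  · have hratio : ∀ᶠ n in atTop, ‖1 - (r n : ℂ) * e‖ ≤ (1 + r n) * ‖1 - e‖ := by
      have h1 : Tendsto (fun n => ‖1 - (r n : ℂ) * e‖) atTop (𝓝 ‖1 - e‖) :=
        (tendsto_const_nhds.sub hlim).norm
      have h2 : Tendsto (fun n => (1 + r n) * ‖1 - e‖) atTop (𝓝 ((1 + 1) * ‖1 - e‖)) :=
        (tendsto_const_nhds.add hr1).mul_const _
      have : 0 < ‖1 - e‖ := norm_pos_iff.2 h1e0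
      exact (h1.eventually_lt h2 (by linarith)).mono fun n hn => hn.le
    filter_upwards [hratio] with n hn
    have him : ((x₀ : ℂ) + y₀ * (I * (1 + r n * e) / (1 - r n * e))).im
        = y₀ * ((1 - r n ^ 2) / ‖1 - (r n : ℂ) * e‖ ^ 2) := by
      have hee : e.re ^ 2 + e.im ^ 2 = 1 := by
        have := sq_norm_sub_sq_re e
        rw [hnorm] at this; linarith
      have hq : normSq (1 - (r n : ℂ) * e) ≠ 0 := by simpa [normSq_eq_zero] using hden n
      rw [← normSq_eq_norm_sq]
      simp only [add_im, ofReal_im, zero_add, im_ofReal_mul, div_im]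
      congr 1
      field_simp
      simp
      linear_combination (-(r n)^2) * hee
    have hnormdiff : ‖(x₀ : ℂ) + y₀ * (I * (1 + r n * e) / (1 - r n * e))
        - ((x₀ + y₀ * Real.tan a : ℝ) : ℂ)‖
        = y₀ * (2 * (1 - r n) / (‖1 - (r n : ℂ) * e‖ * ‖1 - e‖)) := by
      have : (x₀ : ℂ) + y₀ * (I * (1 + r n * e) / (1 - r n * e))
        - ((x₀ + y₀ * Real.tan a : ℝ) : ℂ)
          = y₀ * (I * (2 * ((r n - 1 : ℝ) : ℂ) * e / ((1 - r n * e) * (1 - e)))) := by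
        rw [htgt]
        have := hden n
        field_simp
        push_cast
        ring
      rw [this]
      simp only [norm_mul, norm_div, norm_I, hnorm, norm_real, Real.norm_eq_abs, abs_of_pos hy]
      rw [abs_of_neg (by linarith [(hr n).2])]
      simp
    have hp : 0 < ‖1 - (r n : ℂ) * e‖ := norm_pos_iff.2 (hden n)
    have hp1 : 0 < ‖1 - e‖ := norm_pos_iff.2 h1e0
    have hrn := hr n
    refine ⟨?_, ?_⟩
    · rw [him]
      have : 0 < 1 - r n ^ 2 := by nlinarith
      positivity
    · rw [him, hnormdiff]
      rw [mul_left_comm 2 y₀]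
      gcongr
      rw [mul_div_assoc']
      rw [div_le_div_iff₀ (by positivity) (by positivity)]
      have : 0 < 1 - r n := by linarith
      have key : 2 * (1 - r n) * ‖1 - (r n : ℂ) * e‖ * ‖1 - (r n : ℂ) * e‖
        ≤ 2 * (1 - r n) * ‖1 - (r n : ℂ) * e‖ * ((1 + r n) * ‖1 - e‖) := by gcongr
      nlinarith

/-- Boundary uniqueness on the half-plane: a bounded holomorphic function with limit `0` along the
cones at the points of a set of positive (outer) measure vanishes. The Cayley transform centred at
`z₀` reduces this to `eq_zero_of_radial_limits`; null sets correspond because the boundary map is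
differentiable. -/
lemma eq_zero_of_cone_limits {H : ℂ → ℂ} (hH : DifferentiableOn ℂ H {z | 0 < z.im})
    (hb : ∀ z : ℂ, 0 < z.im → ‖H z‖ ≤ 1) {E : Set ℝ} (hE : volume E ≠ 0)
    (hlim : ∀ x ∈ E, Tendsto H (𝓝[cone x] (x : ℂ)) (𝓝 0)) {z₀ : ℂ} (hz₀ : 0 < z₀.im) :
    H z₀ = 0 := by
  set φ : ℂ → ℂ := fun w => (z₀.re : ℂ) + z₀.im * (I * (1 + w) / (1 - w)) with hφ
  have hden : ∀ w ∈ ball (0 : ℂ) 1, 1 - w ≠ 0 := by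
    intro w hw h
    rw [← sub_eq_zero.1 h] at hw
    simp at hw
  have him : ∀ w ∈ ball (0 : ℂ) 1, 0 < (φ w).im := by
    intro w hw
    have hq : 0 < normSq (1 - w) := normSq_pos.2 (hden w hw)
    have hw' : ‖w‖ < 1 := by simpa using hw
    have : (φ w).im = z₀.im * ((1 - ‖w‖ ^ 2) / normSq (1 - w)) := by
      have h2 : ‖w‖ ^ 2 = w.re ^ 2 + w.im ^ 2 := by rw [← normSq_eq_norm_sq, normSq_apply]; ring
      rw [h2, hφ]
      simp only [add_im, ofReal_im, zero_add, im_ofReal_mul, div_im]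
      congr 1
      field_simp
      simp
      ring
    rw [this]
    have : 0 < 1 - ‖w‖ ^ 2 := by nlinarith [norm_nonneg w]
    positivity
  set ξ : ℝ → ℝ := fun θ => z₀.re + z₀.im * Real.tan ((θ - Real.pi) / 2) with hξ
  set T : Set ℝ := Ioo 0 (2 * Real.pi) ∩ ξ ⁻¹' E with hTdef
  have hT0 : volume T ≠ 0 := by
    intro h
    apply hE
    have hdiff : DifferentiableOn ℝ ξ T := by
      intro θ hθ
      have hcos : Real.cos ((θ - Real.pi) / 2) ≠ 0 := (Real.cos_pos_of_mem_Ioo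
        ⟨by linarith [hθ.1.1], by linarith [hθ.1.2]⟩).ne'
      have h1 : DifferentiableAt ℝ (fun θ => Real.tan ((θ - Real.pi) / 2)) θ :=
        (Real.differentiableAt_tan.2 hcos).comp θ (f := fun θ => (θ - Real.pi) / 2) (by fun_prop)
      exact ((h1.const_mul _).const_add _).differentiableWithinAt
    refine measure_mono_null ?_
      (addHaar_image_eq_zero_of_differentiableOn_of_addHaar_eq_zero volume hdiff h)
    intro x hx
    have hx' : ξ (Real.pi + 2 * Real.arctan ((x - z₀.re) / z₀.im)) = x := by
      rw [hξ]
      simp only [add_sub_cancel_left, mul_div_cancel_left₀ _ (two_ne_zero (α := ℝ)), Real.tan_arctan]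
      field_simp; ring
    refine ⟨_, ⟨⟨?_, ?_⟩, ?_⟩, hx'⟩
    · linarith [Real.neg_pi_div_two_lt_arctan ((x - z₀.re) / z₀.im)]
    · linarith [Real.arctan_lt_pi_div_two ((x - z₀.re) / z₀.im)]
    · rw [mem_preimage, hx']; exact hx
  set r : ℕ → ℝ := fun n => 1 - 1 / ((n : ℝ) + 2) with hrdef
  have hr : ∀ n, 0 < r n ∧ r n < 1 := by
    intro n
    have h2 : (1 : ℝ) < n + 2 := by
      have : (0 : ℝ) ≤ n := n.cast_nonneg
      linarith
    have h3 : 1 / ((n : ℝ) + 2) < 1 := by rw [div_lt_one (by linarith)]; exact h2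
    have h4 : 0 < 1 / ((n : ℝ) + 2) := by positivity
    constructor <;> simp only [hrdef] <;> linarith
  have hr1 : Tendsto r atTop (𝓝 1) := by
    have h := (tendsto_one_div_add_atTop_nhds_zero_nat (𝕜 := ℝ)).comp (tendsto_add_atTop_nat 1)
    have h' : Tendsto (fun n : ℕ => 1 / ((n : ℝ) + 2)) atTop (𝓝 0) := by
      refine h.congr fun n => ?_
      simp; ring
    simpa [hrdef] using tendsto_const_nhds.sub h'
  have hfin := eq_zero_of_radial_limits (g := H ∘ φ) (r := r) (T := T) ?_ ?_ hr ?_ hT0 ?_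
  · have : φ 0 = z₀ := by
      simp only [hφ, add_zero, sub_zero, mul_one, div_one]
      exact re_add_im z₀
    simpa [this] using hfin
  · refine hH.comp ?_ him
    intro w hw
    have := hden w hw
    have h1 : DifferentiableAt ℂ φ w := by
      simp only [hφ]
      fun_prop (disch := assumption)
    exact h1.differentiableWithinAt
  · exact fun w hw => hb _ (him w hw)
  · exact fun θ hθ => ⟨hθ.1.1, hθ.1.2.le⟩
  · intro θ hθ
    exact (hlim _ hθ.2).comp (cayley_tendsto z₀.re z₀.im hz₀ θ hθ.1 hr hr1)

/-! ### Stieltjes transforms -/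

/-- The Stieltjes (Cauchy, Borel) transform of a measure on the line. -/
noncomputable def stieltjes (ν : Measure ℝ) (z : ℂ) : ℂ := ∫ t, ((t : ℂ) - z)⁻¹ ∂ν

lemma abs_im_le_norm_sub (t : ℝ) (z : ℂ) : |z.im| ≤ ‖(t : ℂ) - z‖ := by
  have := abs_im_le_norm ((t : ℂ) - z)
  simpa using this

lemma sub_ne_zero_of_im {z : ℂ} (hz : z.im ≠ 0) (t : ℝ) : (t : ℂ) - z ≠ 0 := by
  intro h
  have := abs_im_le_norm_sub t z
  rw [h, norm_zero] at this
  exact hz (abs_nonpos_iff.1 this)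

lemma continuous_resolvent {z : ℂ} (hz : z.im ≠ 0) : Continuous fun t : ℝ => ((t : ℂ) - z)⁻¹ :=
  (continuous_ofReal.sub continuous_const).inv₀ (sub_ne_zero_of_im hz)

lemma norm_resolvent_le {z : ℂ} (hz : z.im ≠ 0) (t : ℝ) : ‖((t : ℂ) - z)⁻¹‖ ≤ |z.im|⁻¹ := by
  rw [norm_inv]
  exact inv_anti₀ (abs_pos.2 hz) (abs_im_le_norm_sub t z)

lemma integrable_mul_resolvent {ν : Measure ℝ} {h : ℝ → ℂ} (hh : Integrable h ν) {z : ℂ}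
    (hz : z.im ≠ 0) : Integrable (fun t => h t * ((t : ℂ) - z)⁻¹) ν :=
  hh.mul_bdd (c := |z.im|⁻¹) (continuous_resolvent hz).aestronglyMeasurable
    (ae_of_all _ (norm_resolvent_le hz))

lemma integrable_resolvent_of_im (ν : Measure ℝ) [IsFiniteMeasure ν] {z : ℂ}
    (hz : z.im ≠ 0) : Integrable (fun t : ℝ => ((t : ℂ) - z)⁻¹) ν := by
  simpa using integrable_mul_resolvent (h := fun _ => (1 : ℂ)) (integrable_const _) hz

lemma im_resolvent (t : ℝ) (z : ℂ) : (((t : ℂ) - z)⁻¹).im = z.im / ‖(t : ℂ) - z‖ ^ 2 := by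
  rw [inv_im, normSq_eq_norm_sq]; simp

lemma stieltjes_im (ν : Measure ℝ) [IsFiniteMeasure ν] {z : ℂ} (hz : z.im ≠ 0) :
    (stieltjes ν z).im = ∫ t : ℝ, z.im / ‖(t : ℂ) - z‖ ^ 2 ∂ν := by
  have := integral_im (𝕜 := ℂ) (integrable_resolvent_of_im ν hz)
  simp only [RCLike.im_eq_complex_im] at this
  rw [stieltjes, ← this]
  simp only [im_resolvent]

lemma stieltjes_im_nonneg (ν : Measure ℝ) [IsFiniteMeasure ν] {z : ℂ} (hz : 0 < z.im) :
    0 ≤ (stieltjes ν z).im := by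
  rw [stieltjes_im ν hz.ne']
  exact integral_nonneg fun t => by positivity

lemma differentiableOn_stieltjes (ν : Measure ℝ) [IsFiniteMeasure ν] :
    DifferentiableOn ℂ (stieltjes ν) {z | 0 < z.im} := by
  intro z hz
  have hres : stieltjes ν = resolventTransform ν := by
    ext a
    simp [stieltjes, resolventTransform, resolvent, Ring.inverse_eq_inv']
  rw [hres]
  refine (hasDerivAt_resolventTransform z ?_).differentiableAt.differentiableWithinAt
  rintro ⟨x, -, rfl⟩
  simp at hz

/-- A difference of Stieltjes transforms of positive measures is determined by its boundary values on
a set of positive measure. Since `Im (stieltjes ν z) ≥ 0`, the functions `(stieltjes νᵢ + i)⁻¹` are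
bounded by `1`, and `eq_zero_of_cone_limits` applies to half their difference. -/
lemma stieltjes_eq_of_cone_limits {ν₁ ν₂ : Measure ℝ} [IsFiniteMeasure ν₁] [IsFiniteMeasure ν₂]
    {E : Set ℝ} (hE : volume E ≠ 0)
    (hlim : ∀ x ∈ E, Tendsto (fun z => stieltjes ν₁ z - stieltjes ν₂ z)
      (𝓝[cone x] (x : ℂ)) (𝓝 0)) {z : ℂ} (hz : 0 < z.im) :
    stieltjes ν₁ z = stieltjes ν₂ z := by
  have hbd : ∀ (ν : Measure ℝ) [IsFiniteMeasure ν] (z : ℂ), 0 < z.im →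
      1 ≤ ‖stieltjes ν z + I‖ := by
    intro ν _ z hz
    have h1 := abs_im_le_norm (stieltjes ν z + I)
    have h2 := stieltjes_im_nonneg ν hz
    rw [add_im, I_im, abs_of_nonneg (by linarith)] at h1
    linarith
  have hne : ∀ (ν : Measure ℝ) [IsFiniteMeasure ν] (z : ℂ), 0 < z.im → stieltjes ν z + I ≠ 0 :=
    fun ν _ z hz => norm_pos_iff.1 (zero_lt_one.trans_le (hbd ν z hz))
  set H : ℂ → ℂ := fun z => ((stieltjes ν₂ z + I)⁻¹ - (stieltjes ν₁ z + I)⁻¹) / 2 with hH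
  have hHeq : ∀ z : ℂ, 0 < z.im → H z = (stieltjes ν₁ z - stieltjes ν₂ z) /
      (2 * (stieltjes ν₁ z + I) * (stieltjes ν₂ z + I)) := by
    intro z hz
    have h1 := hne ν₁ z hz
    have h2 := hne ν₂ z hz
    simp only [hH]
    field_simp
    ring
  have key : H z = 0 := by
    refine eq_zero_of_cone_limits (H := H) ?_ ?_ hE ?_ hz
    · intro w hw
      have h1 := (differentiableOn_stieltjes ν₁ w hw).add_const I
      have h2 := (differentiableOn_stieltjes ν₂ w hw).add_const I
      exact ((h2.inv (hne ν₂ w hw)).sub (h1.inv (hne ν₁ w hw))).div_const 2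
    · intro w hw
      have h1 : ‖(stieltjes ν₁ w + I)⁻¹‖ ≤ 1 := by
        rw [norm_inv]; exact inv_le_one_of_one_le₀ (hbd ν₁ w hw)
      have h2 : ‖(stieltjes ν₂ w + I)⁻¹‖ ≤ 1 := by
        rw [norm_inv]; exact inv_le_one_of_one_le₀ (hbd ν₂ w hw)
      simp only [hH, norm_div, RCLike.norm_ofNat]
      have := norm_sub_le (stieltjes ν₂ w + I)⁻¹ (stieltjes ν₁ w + I)⁻¹
      linarith
    · intro x hx
      refine squeeze_zero_norm' ?_ ((hlim x hx).norm.trans (by simp))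
      filter_upwards [self_mem_nhdsWithin] with w hw
      have h1 := hbd ν₁ w hw.1
      have h2 := hbd ν₂ w hw.1
      rw [hHeq w hw.1, norm_div]
      apply div_le_self (norm_nonneg _)
      simp only [norm_mul, RCLike.norm_ofNat]
      nlinarith
  rw [hHeq z hz, div_eq_zero_iff] at key
  rcases key with h | h
  · exact sub_eq_zero.1 h
  · have h1 := hne ν₁ z hz
    have h2 := hne ν₂ z hz
    simp [h1, h2] at h

/-- Stieltjes inversion: the Poisson integrals `π⁻¹ Im (stieltjes ν (x + i/c)) dx` converge weakly
to `ν` as `c → ∞`. -/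
lemma tendsto_poisson_average (ν : Measure ℝ) [IsFiniteMeasure ν] {g : ℝ → ℝ} (hg : Continuous g)
    (hgc : HasCompactSupport g) :
    Tendsto (fun c : ℝ => ∫ x : ℝ, (Real.pi⁻¹ * (stieltjes ν (x + (c⁻¹ : ℝ) * I)).im) * g x) atTop
      (𝓝 (∫ t, g t ∂ν)) := by
  set φ : ℝ → ℝ := fun u => Real.pi⁻¹ * (1 + u ^ 2)⁻¹ with hφ
  have hφint : ∫ u, φ u = 1 := by
    simp only [hφ]
    rw [integral_const_mul, integral_univ_inv_one_add_sq, inv_mul_cancel₀ Real.pi_ne_zero]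
  have hφi : Integrable φ := integrable_inv_one_add_sq.const_mul _
  have hφnn : ∀ u, 0 ≤ φ u := fun u => by simp only [hφ]; positivity
  have hφcont : Continuous φ := by
    simp only [hφ]
    exact continuous_const.mul ((by fun_prop : Continuous fun u : ℝ => 1 + u ^ 2).inv₀
      fun u => by positivity)
  have hgi : Integrable g := hg.integrable_of_hasCompactSupport hgc
  obtain ⟨B, hB⟩ := hgc.exists_bound_of_continuous hg
  have hpt : ∀ t, Tendsto (fun c : ℝ => ∫ x, (c * φ (c * (t - x))) * g x) atTop (𝓝 (g t)) := by
    intro t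
    have := tendsto_integral_comp_smul_smul_of_integrable' (μ := (volume : Measure ℝ)) hφnn hφint
      ?_ hgi (hg.continuousAt (x := t))
    · simpa using this
    · simp only [Module.finrank_self, pow_one]
      have h1 : Tendsto (fun u : ℝ => Real.pi⁻¹ * ‖u‖⁻¹) (Bornology.cobounded ℝ) (𝓝 0) := by
        have := ((tendsto_inv_atTop_zero (𝕜 := ℝ)).comp
          (tendsto_norm_cobounded_atTop (E := ℝ))).const_mul Real.pi⁻¹
        rwa [mul_zero] at this
      refine squeeze_zero (fun u => mul_nonneg (norm_nonneg _) (hφnn u)) (fun u => ?_) h1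
      simp only [hφ]
      rw [mul_left_comm]
      gcongr
      rcases eq_or_ne u 0 with rfl | hu
      · simp
      · have : 0 < ‖u‖ := norm_pos_iff.2 hu
        rw [← div_eq_mul_inv, div_le_iff₀ (by positivity), ← Real.norm_of_nonneg (sq_nonneg u),
          norm_pow]
        field_simp
        linarith
  have hint1 : ∀ c : ℝ, 0 < c → ∀ t, ∫ x, c * φ (c * (t - x)) = 1 := by
    intro c hc t
    rw [integral_const_mul, integral_sub_left_eq_self (fun x => φ (c * x)) volume t,
      Measure.integral_comp_mul_left, hφint]
    simp [abs_of_pos hc, hc.ne']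
  have hDCT : Tendsto (fun c : ℝ => ∫ t, (∫ x, (c * φ (c * (t - x))) * g x) ∂ν) atTop
      (𝓝 (∫ t, g t ∂ν)) := by
    refine tendsto_integral_filter_of_dominated_convergence (fun _ => B) ?_ ?_
      (integrable_const _) (ae_of_all _ hpt)
    · filter_upwards with c
      have : Continuous (Function.uncurry fun t x : ℝ => (c * φ (c * (t - x))) * g x) := by
        unfold Function.uncurry; fun_prop
      exact (this.stronglyMeasurable.integral_prod_right (ν := volume)).aestronglyMeasurable
    · filter_upwards [eventually_gt_atTop 0] with c hc
      refine ae_of_all _ fun t => ?_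
      have hi : Integrable fun x => c * φ (c * (t - x)) := by
        apply integrable_of_integral_eq_one (hint1 c hc t)
      calc ‖∫ x, (c * φ (c * (t - x))) * g x‖ ≤ ∫ x, (c * φ (c * (t - x))) * B := by
            refine norm_integral_le_of_norm_le (hi.mul_const B) (ae_of_all _ fun x => ?_)
            rw [norm_mul, Real.norm_of_nonneg (mul_nonneg hc.le (hφnn _))]
            exact mul_le_mul_of_nonneg_left (hB x) (mul_nonneg hc.le (hφnn _))
        _ = B := by rw [integral_mul_const, hint1 c hc t, one_mul]
  refine hDCT.congr' ?_
  filter_upwards [eventually_gt_atTop 0] with c hc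
  have hker : ∀ x t : ℝ, c * φ (c * (t - x))
      = Real.pi⁻¹ * (((x : ℂ) + (c⁻¹ : ℝ) * I).im / ‖(t : ℂ) - (x + (c⁻¹ : ℝ) * I)‖ ^ 2) := by
    intro x t
    rw [← normSq_eq_norm_sq, normSq_apply]
    simp [hφ]
    have : 0 < 1 + (c * (t - x)) ^ 2 := by positivity
    have : 0 < (t - x) * (t - x) + c⁻¹ * c⁻¹ :=
      add_pos_of_nonneg_of_pos (mul_self_nonneg _) (by positivity)
    field_simp
    ring
  rw [integral_integral_swap]
  · congr 1
    ext x
    rw [integral_mul_const, stieltjes_im ν (by simp [hc.ne']), ← integral_const_mul]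
    simp only [hker]
  · have hbase : Integrable (Function.uncurry fun (t : ℝ) (x : ℝ) => g x) (ν.prod volume) := by
      simpa [Function.uncurry_def] using hgi.comp_snd ν
    refine hbase.bdd_mul (c := c * Real.pi⁻¹) (f := fun p : ℝ × ℝ => c * φ (c * (p.1 - p.2))) ?_ ?_
    · exact (by fun_prop : Continuous fun p : ℝ × ℝ =>
        c * φ (c * (p.1 - p.2))).aestronglyMeasurable
    · refine ae_of_all _ fun p => ?_
      rw [Real.norm_of_nonneg (mul_nonneg hc.le (hφnn _))]
      gcongr
      simp only [hφ]
      apply mul_le_of_le_one_right (by positivity)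
      apply inv_le_one_of_one_le₀
      nlinarith [sq_nonneg (c * (p.1 - p.2))]

lemma measure_eq_of_stieltjes_eq {ν₁ ν₂ : Measure ℝ} [IsFiniteMeasure ν₁] [IsFiniteMeasure ν₂]
    (h : ∀ z : ℂ, 0 < z.im → stieltjes ν₁ z = stieltjes ν₂ z) : ν₁ = ν₂ := by
  refine Measure.ext_of_integral_eq_on_compactlySupported fun g => ?_
  refine tendsto_nhds_unique (tendsto_poisson_average ν₁ g.continuous g.hasCompactSupport)
    ((tendsto_poisson_average ν₂ g.continuous g.hasCompactSupport).congr' ?_)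
  filter_upwards [eventually_gt_atTop 0] with c hc
  congr 1
  ext x
  rw [h _ (by simpa using hc)]
  rfl

/-- A function is determined by the boundary values, on a set of positive measure, of the Stieltjes
transform of `h ν`: the positive and negative parts of `h ν` have the same Stieltjes transform, hence
coincide. -/
lemma ae_eq_zero_of_cone_limits {ν : Measure ℝ} {h : ℝ → ℝ}
    (hh : Integrable h ν) {E : Set ℝ} (hE : volume E ≠ 0)
    (hlim : ∀ x ∈ E, Tendsto (fun z => ∫ t, (h t : ℂ) * ((t : ℂ) - z)⁻¹ ∂ν)
      (𝓝[cone x] (x : ℂ)) (𝓝 0)) : h =ᵐ[ν] 0 := by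
  set ν₁ := ν.withDensity fun t => ENNReal.ofReal (h t) with hν₁
  set ν₂ := ν.withDensity fun t => ENNReal.ofReal (-h t) with hν₂
  have : IsFiniteMeasure ν₁ := isFiniteMeasure_withDensity_ofReal hh.2
  have : IsFiniteMeasure ν₂ := isFiniteMeasure_withDensity_ofReal hh.neg.2
  have hform : ∀ {k : ℝ → ℝ}, Integrable k ν → ∀ z : ℂ,
      stieltjes (ν.withDensity fun t => ENNReal.ofReal (k t)) z
        = ∫ t, ((max (k t) 0 : ℝ) : ℂ) * ((t : ℂ) - z)⁻¹ ∂ν := by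
    intro k hk z
    rw [stieltjes, integral_withDensity_eq_integral_toReal_smul₀ hk.1.aemeasurable.ennreal_ofReal
      (ae_of_all _ fun _ => ENNReal.ofReal_lt_top)]
    simp [ENNReal.toReal_ofReal']
  have hsub : ∀ z : ℂ, 0 < z.im → stieltjes ν₁ z - stieltjes ν₂ z
      = ∫ t, (h t : ℂ) * ((t : ℂ) - z)⁻¹ ∂ν := by
    intro z hz
    rw [hν₁, hν₂, hform hh, hform (k := fun t => -h t) hh.neg, ← integral_sub]
    · congr 1
      ext t
      rw [← sub_mul, ← ofReal_sub]
      congr 2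
      rcases le_total (h t) 0 with h0 | h0
      · rw [max_eq_right h0, max_eq_left (by linarith)]; ring
      · rw [max_eq_left h0, max_eq_right (by linarith)]; ring
    · exact integrable_mul_resolvent hh.pos_part.ofReal hz.ne'
    · exact integrable_mul_resolvent hh.neg.pos_part.ofReal hz.ne'
  have heq : ν₁ = ν₂ := by
    refine measure_eq_of_stieltjes_eq fun z hz => stieltjes_eq_of_cone_limits hE (fun x hx => ?_) hz
    refine (hlim x hx).congr' ?_
    filter_upwards [self_mem_nhdsWithin] with w hw
    exact (hsub w hw.1).symm
  have hae := (withDensity_eq_iff hh.1.aemeasurable.ennreal_ofReal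
    hh.neg.1.aemeasurable.ennreal_ofReal hh.lintegral_lt_top.ne).1 heq
  filter_upwards [hae] with t ht
  simp only [Pi.zero_apply]
  rcases lt_trichotomy (h t) 0 with h0 | h0 | h0
  · rw [ENNReal.ofReal_of_nonpos h0.le] at ht
    have := ENNReal.ofReal_eq_zero.1 ht.symm
    simp at this; linarith
  · exact h0
  · simp only [Pi.neg_apply] at ht
    rw [ENNReal.ofReal_of_nonpos (p := -h t) (by linarith)] at ht
    have := ENNReal.ofReal_eq_zero.1 ht
    linarith

/-! ### Boundary behaviour of Poisson integrals -/

/-- Poisson integrals of a measure of at most linear growth around `x` are bounded on the cone at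
`x`. The layer-cake formula applies, since `{z.im / ‖t - z‖² > s}` lies in the ball of radius
`3 √(z.im / s)` about `x`, and is empty for `s ≥ 1 / z.im`. -/
lemma lintegral_poisson_le {ν : Measure ℝ} {x : ℝ} {z : ℂ} (hz : z ∈ cone x) {C : ℝ} (hC : 0 ≤ C)
    (hν : ∀ ρ : ℝ, 0 < ρ → ν (closedBall x ρ) ≤ ENNReal.ofReal (C * ρ)) :
    ∫⁻ t : ℝ, ENNReal.ofReal (z.im / ‖(t : ℂ) - z‖ ^ 2) ∂ν ≤ ENNReal.ofReal (6 * C) := by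
  obtain ⟨hy, hzx⟩ := hz
  set y := z.im with hydef
  have hyn : ∀ t : ℝ, y ≤ ‖(t : ℂ) - z‖ := fun t => (le_abs_self _).trans (abs_im_le_norm_sub t z)
  have hcont : Continuous fun t : ℝ => y / ‖(t : ℂ) - z‖ ^ 2 :=
    continuous_const.div (by fun_prop) fun t => by
      have := hy.trans_le (hyn t); positivity
  rw [lintegral_eq_lintegral_meas_lt ν (ae_of_all _ fun t => by positivity)
    hcont.measurable.aemeasurable]
  have hbound : ∀ s ∈ Ioi (0 : ℝ), ν {t : ℝ | s < y / ‖(t : ℂ) - z‖ ^ 2} ≤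
      (Ioc 0 (1 / y)).indicator
        (fun s => ENNReal.ofReal (3 * C * Real.sqrt y * s ^ (-(1 / 2) : ℝ))) s := by
    intro s hs
    have hs : 0 < s := hs
    by_cases hsy : s ≤ 1 / y
    · rw [indicator_of_mem (show s ∈ Ioc 0 (1 / y) from ⟨hs, hsy⟩)]
      have hsub : {t : ℝ | s < y / ‖(t : ℂ) - z‖ ^ 2} ⊆ closedBall x (3 * Real.sqrt (y / s)) := by
        intro t ht
        have ht : s < y / ‖(t : ℂ) - z‖ ^ 2 := ht
        have hp := hy.trans_le (hyn t)
        rw [lt_div_iff₀ (by positivity), mul_comm, ← lt_div_iff₀ hs] at ht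
        have h1 : ‖(t : ℂ) - z‖ ≤ Real.sqrt (y / s) := Real.le_sqrt_of_sq_le ht.le
        have h2 : ‖(t : ℂ) - x‖ ≤ ‖(t : ℂ) - z‖ + ‖z - x‖ := by
          simpa using norm_add_le ((t : ℂ) - z) (z - x)
        rw [← ofReal_sub, norm_real] at h2
        rw [mem_closedBall, dist_eq_norm]
        have := hyn t
        linarith
      refine (measure_mono hsub).trans ((hν _ (by positivity)).trans_eq ?_)
      congr 1
      rw [Real.sqrt_div hy.le, Real.rpow_neg hs.le, ← Real.sqrt_eq_rpow]
      ring
    · have : {t : ℝ | s < y / ‖(t : ℂ) - z‖ ^ 2} = ∅ := by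
        ext t
        simp only [mem_ofPred_eq, mem_empty_iff_false, iff_false, not_lt]
        have hp := hy.trans_le (hyn t)
        refine le_trans ?_ (not_le.1 hsy).le
        rw [div_le_div_iff₀ (by positivity) hy]
        have := hyn t
        nlinarith
      rw [this]; simp
  refine (setLIntegral_mono' measurableSet_Ioi hbound).trans ?_
  rw [setLIntegral_indicator measurableSet_Ioc, inter_eq_left.2 Ioc_subset_Ioi_self]
  have hi : IntervalIntegrable (fun s : ℝ => s ^ (-(1 / 2) : ℝ)) volume 0 (1 / y) :=
    intervalIntegral.intervalIntegrable_rpow' (by norm_num)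
  rw [intervalIntegrable_iff_integrableOn_Ioc_of_le (by positivity)] at hi
  rw [← ofReal_integral_eq_lintegral_ofReal (hi.const_mul _)]
  · rw [integral_const_mul, ← intervalIntegral.integral_of_le (by positivity),
      integral_rpow (Or.inl (by norm_num))]
    apply le_of_eq
    congr 1
    have h12 : (-(1 / 2) + 1 : ℝ) = 1 / 2 := by norm_num
    rw [h12, ← Real.sqrt_eq_rpow, Real.zero_rpow (by norm_num), Real.sqrt_div zero_le_one,
      Real.sqrt_one]
    have : 0 < Real.sqrt y := Real.sqrt_pos.2 hy
    field_simp
    ring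
  · filter_upwards [ae_restrict_mem measurableSet_Ioc] with s hs
    have := hs.1
    simp only [Pi.zero_apply]
    positivity

lemma integrable_poisson (ν : Measure ℝ) [IsFiniteMeasure ν] {z : ℂ} (hz : z.im ≠ 0) :
    Integrable (fun t : ℝ => z.im / ‖(t : ℂ) - z‖ ^ 2) ν := by
  have := (integrable_resolvent_of_im ν hz).im
  simpa only [RCLike.im_eq_complex_im, im_resolvent] using this

lemma tendsto_im_cone (x : ℝ) : Tendsto im (𝓝[cone x] (x : ℂ)) (𝓝[>] 0) := by
  rw [tendsto_nhdsWithin_iff]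
  refine ⟨?_, ?_⟩
  · have := (continuous_im.tendsto (x : ℂ)).mono_left (nhdsWithin_le_nhds (s := cone x))
    simpa using this
  · filter_upwards [self_mem_nhdsWithin] with z hz using hz.1

/-- If `ν` has density less than `C` at `x`, its Poisson integral is at most a multiple of `C` near
`x` in the cone: the part near `x` is bounded by `lintegral_poisson_le`, and the rest tends to `0`. -/
lemma eventually_poisson_le (ν : Measure ℝ) [IsFiniteMeasure ν] {x : ℝ} {L : ENNReal}
    (hL : Tendsto (fun r => ν (closedBall x r) / volume (closedBall x r)) (𝓝[>] 0) (𝓝 L))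
    {C : ℝ} (hC : 0 < C) (hLC : L < ENNReal.ofReal C) :
    ∀ᶠ z in 𝓝[cone x] (x : ℂ), ∫ t : ℝ, z.im / ‖(t : ℂ) - z‖ ^ 2 ∂ν ≤ 13 * C := by
  have h1 := hL.eventually_lt_const hLC
  obtain ⟨δ, hδ, hδ'⟩ := (mem_nhdsGT_iff_exists_Ioc_subset).1 h1
  have hδ : 0 < δ := hδ
  have hball : ∀ r, 0 < r → r ≤ δ → ν (closedBall x r) ≤ ENNReal.ofReal (2 * C * r) := by
    intro r hr hrδ
    have h2 : ν (closedBall x r) / volume (closedBall x r) < ENNReal.ofReal C := hδ' ⟨hr, hrδ⟩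
    rw [Real.volume_closedBall] at h2
    have h3 := (ENNReal.div_le_iff (by simpa using hr) ENNReal.ofReal_ne_top).1 h2.le
    rw [← ENNReal.ofReal_mul hC.le] at h3
    convert h3 using 2
    ring
  set m := ν.real univ with hm
  have hsmall : ∀ᶠ z in 𝓝[cone x] (x : ℂ), z.im < δ / 4 ∧ 4 * m * z.im / δ ^ 2 < C := by
    have h3 : Tendsto im (𝓝[cone x] (x : ℂ)) (𝓝 0) := (tendsto_im_cone x).mono_right nhdsWithin_le_nhds
    refine (h3.eventually_lt_const (by positivity)).and ?_
    have h4 : Tendsto (fun z : ℂ => 4 * m * z.im / δ ^ 2) (𝓝[cone x] (x : ℂ)) (𝓝 0) := by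
      simpa using (h3.const_mul (4 * m)).div_const (δ ^ 2)
    exact h4.eventually_lt_const hC
  filter_upwards [hsmall, self_mem_nhdsWithin] with z hz hzc
  have hy : 0 < z.im := hzc.1
  have hint := integrable_poisson ν hy.ne'
  rw [← integral_add_compl (measurableSet_closedBall (x := x) (ε := δ)) hint]
  have hA : ∫ t in closedBall x δ, z.im / ‖(t : ℂ) - z‖ ^ 2 ∂ν ≤ 12 * C := by
    rw [integral_eq_lintegral_of_nonneg_ae (ae_of_all _ fun t => by positivity)
      hint.integrableOn.1]
    refine ENNReal.toReal_le_of_le_ofReal (by positivity) ?_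
    have := lintegral_poisson_le (ν := ν.restrict (closedBall x δ)) hzc (C := 2 * C) (by positivity) ?_
    · convert this using 2; ring
    · intro ρ hρ
      rw [Measure.restrict_apply measurableSet_closedBall]
      rcases le_total ρ δ with h | h
      · exact (measure_mono inter_subset_left).trans (hball ρ hρ h)
      · refine (measure_mono inter_subset_right).trans ((hball δ hδ le_rfl).trans ?_)
        exact ENNReal.ofReal_le_ofReal (by gcongr)
  have hB : ∫ t in (closedBall x δ)ᶜ, z.im / ‖(t : ℂ) - z‖ ^ 2 ∂ν ≤ C := by
    calc ∫ t in (closedBall x δ)ᶜ, z.im / ‖(t : ℂ) - z‖ ^ 2 ∂ν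
        ≤ ∫ t in (closedBall x δ)ᶜ, 4 * z.im / δ ^ 2 ∂ν := by
          refine setIntegral_mono_on hint.integrableOn (integrable_const _)
            measurableSet_closedBall.compl fun t ht => ?_
          have ht' : δ < ‖(t : ℂ) - x‖ := by
            rw [mem_compl_iff, mem_closedBall, dist_eq_norm, not_le] at ht
            rwa [← ofReal_sub, norm_real]
          have h2 : ‖(t : ℂ) - x‖ ≤ ‖(t : ℂ) - z‖ + ‖z - x‖ := by
            simpa using norm_add_le ((t : ℂ) - z) (z - x)
          have h3 : δ / 2 ≤ ‖(t : ℂ) - z‖ := by linarith [hzc.2, hz.1]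
          calc z.im / ‖(t : ℂ) - z‖ ^ 2 ≤ z.im / (δ / 2) ^ 2 := by gcongr
            _ = 4 * z.im / δ ^ 2 := by field_simp; ring
      _ = ν.real (closedBall x δ)ᶜ * (4 * z.im / δ ^ 2) := by
          rw [setIntegral_const, smul_eq_mul]
      _ ≤ m * (4 * z.im / δ ^ 2) := by
          gcongr
          exact measureReal_mono (subset_univ _)
      _ ≤ C := by
          have := hz.2.le
          calc m * (4 * z.im / δ ^ 2) = 4 * m * z.im / δ ^ 2 := by ring
            _ ≤ C := this
  linarith

/-- If `ν` has positive density at `x`, its Poisson integral is bounded below near `x` in the cone,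
because the kernel is at least `1 / (9 z.im)` on the ball of radius `z.im` about `x`. -/
lemma eventually_le_poisson (ν : Measure ℝ) [IsFiniteMeasure ν] {x : ℝ} {L : ENNReal}
    (hL : Tendsto (fun r => ν (closedBall x r) / volume (closedBall x r)) (𝓝[>] 0) (𝓝 L))
    (hL0 : L ≠ 0) :
    ∃ c > 0, ∀ᶠ z in 𝓝[cone x] (x : ℂ), c ≤ ∫ t : ℝ, z.im / ‖(t : ℂ) - z‖ ^ 2 ∂ν := by
  obtain ⟨c, hc0, hcL⟩ := ENNReal.lt_iff_exists_nnreal_btwn.1 (pos_iff_ne_zero.2 hL0)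
  have hc0 : 0 < (c : ℝ) := by exact_mod_cast hc0
  refine ⟨2 * c / 9, by positivity, ?_⟩
  have h1 := (tendsto_im_cone x).eventually (hL.eventually_const_lt hcL)
  filter_upwards [h1, self_mem_nhdsWithin] with z hz hzc
  have hy : 0 < z.im := hzc.1
  have hint := integrable_poisson ν hy.ne'
  rw [Real.volume_closedBall] at hz
  have h2 := ENNReal.mul_le_of_le_div hz.le
  have h3 : 2 * c * z.im ≤ ν.real (closedBall x z.im) := by
    have := ENNReal.toReal_mono (measure_ne_top _ _) h2
    rw [ENNReal.toReal_mul, ENNReal.toReal_ofReal (by positivity)] at this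
    simp only [ENNReal.coe_toReal] at this
    rw [Measure.real]; linarith
  calc 2 * c / 9 = 2 * c * z.im * (1 / (9 * z.im)) := by field_simp
    _ ≤ ν.real (closedBall x z.im) * (1 / (9 * z.im)) := by gcongr
    _ = ∫ t in closedBall x z.im, 1 / (9 * z.im) ∂ν := by rw [setIntegral_const, smul_eq_mul]
    _ ≤ ∫ t in closedBall x z.im, z.im / ‖(t : ℂ) - z‖ ^ 2 ∂ν := by
      refine setIntegral_mono_on (integrable_const _) hint.integrableOn
        measurableSet_closedBall fun t ht => ?_
      rw [mem_closedBall, dist_eq_norm] at ht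
      have h5 : ‖(t : ℂ) - z‖ ≤ ‖(t : ℂ) - x‖ + ‖z - x‖ := by
        simpa using norm_sub_le ((t : ℂ) - x) (z - x)
      rw [← ofReal_sub, norm_real] at h5
      have h6 : ‖(t : ℂ) - z‖ ≤ 3 * z.im := by linarith [hzc.2]
      have h7 : 0 < ‖(t : ℂ) - z‖ := norm_pos_iff.2 (sub_ne_zero_of_im hy.ne' t)
      rw [div_le_div_iff₀ (by positivity) (by positivity)]
      nlinarith
    _ ≤ ∫ t : ℝ, z.im / ‖(t : ℂ) - z‖ ^ 2 ∂ν :=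
      setIntegral_le_integral hint (ae_of_all _ fun t => by positivity)

/-! ### Resolvents of rank-one perturbations -/

lemma memLp_mul_resolvent {ν : Measure ℝ} [IsFiniteMeasure ν] (φ : Lp ℂ 2 ν) {z : ℂ}
    (hz : z.im ≠ 0) : MemLp (fun t : ℝ => φ t * ((t : ℂ) - z)⁻¹) 2 ν := by
  refine MemLp.of_le_mul (c := |z.im|⁻¹) (Lp.memLp φ)
    ((Lp.aestronglyMeasurable φ).mul (continuous_resolvent hz).aestronglyMeasurable)
    (ae_of_all _ fun t => ?_)
  rw [norm_mul, mul_comm]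
  gcongr
  exact norm_resolvent_le hz _

lemma integrable_coe_Lp {ν : Measure ℝ} [IsFiniteMeasure ν] (φ : Lp ℂ 2 ν) : Integrable φ ν :=
  (Lp.memLp φ).integrable (by norm_num)

section
variable {μ : Measure ℝ} {one : Lp ℂ 2 μ}
    {A : ℝ → (Lp ℂ 2 μ →L[ℂ] Lp ℂ 2 μ)}
    {μm : ℝ → Measure ℝ}
    {V : ∀ α : ℝ, Lp ℂ 2 μ ≃ₗᵢ[ℂ] Lp ℂ 2 (μm α)}

/-- The resolvent of `A α` exists off the real line and is computed in the spectral representation. -/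
lemma exists_resolvent (hμm_fin : ∀ α, IsFiniteMeasure (μm α))
    (hV : ∀ (α : ℝ) (g : Lp ℂ 2 μ),
      (V α (A α g) : ℝ → ℂ) =ᵐ[μm α] fun t => t * (V α g) t)
    (hV1 : ∀ α : ℝ, (V α one : ℝ → ℂ) =ᵐ[μm α] fun _ => 1)
    (f : Lp ℂ 2 μ) (α : ℝ) {z : ℂ} (hz : z.im ≠ 0) :
    ∃ g : Lp ℂ 2 μ, A α g - z • g = f ∧
      ⟪one, g⟫ = ∫ t : ℝ, V α f t * ((t : ℂ) - z)⁻¹ ∂(μm α) := by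
  have := hμm_fin α
  set G := (memLp_mul_resolvent (V α f) hz).toLp with hG
  have hGc : G =ᵐ[μm α] fun t : ℝ => V α f t * ((t : ℂ) - z)⁻¹ := MemLp.coeFn_toLp _
  refine ⟨(V α).symm G, ?_, ?_⟩
  · apply (V α).injective
    rw [map_sub, map_smul, LinearIsometryEquiv.apply_symm_apply]
    apply Lp.ext
    have h1 := hV α ((V α).symm G)
    rw [LinearIsometryEquiv.apply_symm_apply] at h1
    filter_upwards [h1, Lp.coeFn_sub (V α (A α ((V α).symm G))) (z • G), Lp.coeFn_smul z G, hGc]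
      with t h1 h2 h3 h4
    rw [h2, Pi.sub_apply, h3, h1, Pi.smul_apply, h4, smul_eq_mul]
    have := sub_ne_zero_of_im hz t
    field_simp
  · rw [← (V α).inner_map_map, LinearIsometryEquiv.apply_symm_apply, L2.inner_def]
    refine integral_congr_ae ?_
    filter_upwards [hV1 α, hGc] with t h1 h2
    rw [h1, h2]
    simp

lemma resolvent_injective (hV : ∀ (α : ℝ) (g : Lp ℂ 2 μ),
      (V α (A α g) : ℝ → ℂ) =ᵐ[μm α] fun t => t * (V α g) t)
    {α : ℝ} {z : ℂ} (hz : z.im ≠ 0) {g : Lp ℂ 2 μ} (hg : A α g - z • g = 0) : g = 0 := by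
  apply (V α).injective
  rw [map_zero]
  have h0 : V α (A α g) = z • V α g := by rw [← map_smul, sub_eq_zero.1 hg]
  have h1 := hV α g
  rw [h0] at h1
  apply Lp.ext
  filter_upwards [h1, Lp.coeFn_smul z (V α g), Lp.coeFn_zero ℂ 2 (μm α)] with t h1 h2 h3
  rw [h3, Pi.zero_apply]
  rw [h2, Pi.smul_apply, smul_eq_mul] at h1
  have h4 : ((t : ℂ) - z) * V α g t = 0 := by rw [sub_mul, h1, sub_self]
  exact (mul_eq_zero.1 h4).resolve_left (sub_ne_zero_of_im hz t)

/-- `A β` is a rank-one perturbation of `A α`. -/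
lemma perturbation_eq (hone : (one : ℝ → ℂ) =ᵐ[μ] fun _ => 1)
    (hA : ∀ (α : ℝ) (g : Lp ℂ 2 μ),
      (A α g : ℝ → ℂ) =ᵐ[μ] fun t => t * g t + (α : ℂ) * ⟪one, g⟫) (α β : ℝ) (g : Lp ℂ 2 μ) :
    A β g = A α g + (((β - α : ℝ) : ℂ) * ⟪one, g⟫) • one := by
  apply Lp.ext
  filter_upwards [hA α g, hA β g, hone, Lp.coeFn_add (A α g) ((((β - α : ℝ) : ℂ) * ⟪one, g⟫) • one),
    Lp.coeFn_smul (((β - α : ℝ) : ℂ) * ⟪one, g⟫) one] with t h1 h2 h3 h4 h5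
  rw [h4, Pi.add_apply, h5, Pi.smul_apply, h1, h2, h3, smul_eq_mul]
  push_cast
  ring

/-- The second resolvent identity for the pair `A α`, `A β`, paired with the vector `one`: the
transforms of `f` in the two spectral representations differ by the factor
`1 + (β - α) (stieltjes (μm α) z)`. -/
lemma integral_resolvent_perturbation (hone : (one : ℝ → ℂ) =ᵐ[μ] fun _ => 1)
    (hA : ∀ (α : ℝ) (g : Lp ℂ 2 μ),
      (A α g : ℝ → ℂ) =ᵐ[μ] fun t => t * g t + (α : ℂ) * ⟪one, g⟫)
    (hμm_fin : ∀ α, IsFiniteMeasure (μm α))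
    (hV : ∀ (α : ℝ) (g : Lp ℂ 2 μ),
      (V α (A α g) : ℝ → ℂ) =ᵐ[μm α] fun t => t * (V α g) t)
    (hV1 : ∀ α : ℝ, (V α one : ℝ → ℂ) =ᵐ[μm α] fun _ => 1)
    (f : Lp ℂ 2 μ) (α β : ℝ) {z : ℂ} (hz : z.im ≠ 0) :
    (∫ t : ℝ, V β f t * ((t : ℂ) - z)⁻¹ ∂(μm β)) *
      (1 + ((β - α : ℝ) : ℂ) * stieltjes (μm α) z) =
      ∫ t : ℝ, V α f t * ((t : ℂ) - z)⁻¹ ∂(μm α) := by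
  obtain ⟨g, hg, hgi⟩ := exists_resolvent hμm_fin hV hV1 f α hz
  obtain ⟨k, hk, hki⟩ := exists_resolvent hμm_fin hV hV1 f β hz
  obtain ⟨e, he, hei⟩ := exists_resolvent hμm_fin hV hV1 one α hz
  have hst : ⟪one, e⟫ = stieltjes (μm α) z := by
    rw [hei, stieltjes]
    refine integral_congr_ae ?_
    filter_upwards [hV1 α] with t h1
    rw [h1, one_mul]
  set c := ((β - α : ℝ) : ℂ) * ⟪one, k⟫ with hc
  have h0 : k + c • e - g = 0 := by
    apply resolvent_injective hV hz (α := α)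
    have h1 : A α k - z • k + c • one = f := by
      rw [← hk, perturbation_eq hone hA α β k]; abel
    have h2 : A α (k + c • e - g) - z • (k + c • e - g) =
        (A α k - z • k + c • (A α e - z • e)) - (A α g - z • g) := by
      rw [map_sub, map_add, map_smul]
      module
    rw [h2, he, h1, hg, sub_self]
  have h3 : ⟪one, k⟫ + c * ⟪one, e⟫ = ⟪one, g⟫ := by
    rw [← sub_eq_zero.1 h0, inner_add_right, inner_smul_right]
  rw [← hki, ← hgi, ← h3, hst, hc]
  ring

/-- The Aronszajn-Krein formula, which is `integral_resolvent_perturbation` for `f = one`. -/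
lemma stieltjes_perturbation (hone : (one : ℝ → ℂ) =ᵐ[μ] fun _ => 1)
    (hA : ∀ (α : ℝ) (g : Lp ℂ 2 μ),
      (A α g : ℝ → ℂ) =ᵐ[μ] fun t => t * g t + (α : ℂ) * ⟪one, g⟫)
    (hμm_fin : ∀ α, IsFiniteMeasure (μm α))
    (hV : ∀ (α : ℝ) (g : Lp ℂ 2 μ),
      (V α (A α g) : ℝ → ℂ) =ᵐ[μm α] fun t => t * (V α g) t)
    (hV1 : ∀ α : ℝ, (V α one : ℝ → ℂ) =ᵐ[μm α] fun _ => 1)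
    (α β : ℝ) {z : ℂ} (hz : z.im ≠ 0) :
    stieltjes (μm β) z * (1 + ((β - α : ℝ) : ℂ) * stieltjes (μm α) z) = stieltjes (μm α) z := by
  have key : ∀ γ, ∫ t : ℝ, V γ one t * ((t : ℂ) - z)⁻¹ ∂(μm γ) = stieltjes (μm γ) z := by
    intro γ
    rw [stieltjes]
    refine integral_congr_ae ?_
    filter_upwards [hV1 γ] with t h1
    rw [h1, one_mul]
  have := integral_resolvent_perturbation hone hA hμm_fin hV hV1 one α β hz
  rwa [key, key] at this
end

/-! ### Boundary limits of the two transforms -/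

lemma stieltjes_conj (ν : Measure ℝ) (z : ℂ) : stieltjes ν (conj z) = conj (stieltjes ν z) := by
  rw [stieltjes, stieltjes, ← integral_conj]
  simp

/-- The algebraic core. Put `W = 1 + δ F₁`. The first identity yields `|W|² Im F₂ = Im F₁`, so `W` is
bounded. With `D = K z - K (conj z)`, the second identity at `z` and `conj z` yields
`D₁ W - D₂ |W|² = 2 i δ (Im F₁) K₁ z`. Thus `K₁` tends to `0` if both jumps `D₁` and `D₂` do. -/
lemma tendsto_zero_of_identities {x δ : ℝ} (hδ : δ ≠ 0) {F₁ F₂ K₁ K₂ : ℂ → ℂ}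
    (hF : ∀ z : ℂ, z.im ≠ 0 → F₂ z * (1 + δ * F₁ z) = F₁ z)
    (hK : ∀ z : ℂ, z.im ≠ 0 → K₂ z * (1 + δ * F₁ z) = K₁ z)
    (hconj : ∀ z, F₁ (conj z) = conj (F₁ z)) {c C : ℝ} (hc : 0 < c)
    (h₁ : ∀ᶠ z in 𝓝[cone x] (x : ℂ), c ≤ (F₁ z).im)
    (h₁' : ∀ᶠ z in 𝓝[cone x] (x : ℂ), (F₁ z).im ≤ C)
    (h₂ : ∀ᶠ z in 𝓝[cone x] (x : ℂ), c ≤ (F₂ z).im)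
    (hD₁ : Tendsto (fun z => K₁ z - K₁ (conj z)) (𝓝[cone x] (x : ℂ)) (𝓝 0))
    (hD₂ : Tendsto (fun z => K₂ z - K₂ (conj z)) (𝓝[cone x] (x : ℂ)) (𝓝 0)) :
    Tendsto K₁ (𝓝[cone x] (x : ℂ)) (𝓝 0) := by
  set M := Real.sqrt (C / c) with hM
  have hlim : Tendsto (fun z => (‖K₁ z - K₁ (conj z)‖ * M + ‖K₂ z - K₂ (conj z)‖ * M ^ 2) /
      (2 * |δ| * c)) (𝓝[cone x] (x : ℂ)) (𝓝 0) := by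
    simpa using ((hD₁.norm.mul_const M).add (hD₂.norm.mul_const (M ^ 2))).div_const (2 * |δ| * c)
  refine squeeze_zero_norm' ?_ hlim
  filter_upwards [h₁, h₁', h₂, self_mem_nhdsWithin] with z h1 h1' h2 hzc
  have hz : z.im ≠ 0 := hzc.1.ne'
  have hz' : (conj z).im ≠ 0 := by simpa using hz
  set W : ℂ := 1 + δ * F₁ z with hW
  have hWc : 1 + δ * F₁ (conj z) = conj W := by rw [hconj, hW]; simp
  -- Imaginary parts in `F₂ |W|² = F₁ conj W = F₁ + δ |F₁|²`.
  have him : (F₂ z).im * ‖W‖ ^ 2 = (F₁ z).im := by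
    have e1 : F₂ z * (‖W‖ ^ 2 : ℝ) = F₁ z * conj W := by
      rw [← hF z hz, ← normSq_eq_norm_sq, ← mul_conj]; ring
    have e2 := congrArg im e1
    rw [im_mul_ofReal] at e2
    rw [e2, hW]
    simp
    ring
  have hWsq : ‖W‖ ^ 2 ≤ C / c := by
    rw [le_div_iff₀ hc]
    nlinarith [sq_nonneg ‖W‖]
  have hWM : ‖W‖ ≤ M := Real.le_sqrt_of_sq_le hWsq
  have hkey : (K₁ z - K₁ (conj z)) * W - (K₂ z - K₂ (conj z)) * (‖W‖ ^ 2 : ℝ) =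
      2 * I * δ * (F₁ z).im * K₁ z := by
    have e1 := hK z hz
    have e2 := hK _ hz'
    rw [hWc] at e2
    have e3 : W - conj W = 2 * I * δ * (F₁ z).im := by
      rw [sub_conj, hW]; simp; ring
    have e4 : ((‖W‖ ^ 2 : ℝ) : ℂ) = W * conj W := by
      rw [← normSq_eq_norm_sq, ← mul_conj]
    rw [← e3, e4, ← e2, ← e1]
    ring
  have hn : 2 * |δ| * (F₁ z).im * ‖K₁ z‖ ≤
      ‖K₁ z - K₁ (conj z)‖ * M + ‖K₂ z - K₂ (conj z)‖ * M ^ 2 := by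
    have e1 : ‖2 * I * δ * (F₁ z).im * K₁ z‖ = 2 * |δ| * (F₁ z).im * ‖K₁ z‖ := by
      rw [norm_mul, norm_mul, norm_mul, norm_mul, norm_real, norm_real, norm_I]
      simp [abs_of_pos (hc.trans_le h1)]
    rw [← e1, ← hkey]
    refine (norm_sub_le _ _).trans ?_
    rw [norm_mul, norm_mul, norm_real, Real.norm_of_nonneg (by positivity)]
    gcongr
  rw [le_div_iff₀ (by positivity)]
  refine le_trans ?_ hn
  have : 0 ≤ |δ| * ‖K₁ z‖ := by positivity
  nlinarith

/-- Where the measure `|φ| ν` has density zero, the jump of the Stieltjes transform of `φ ν` across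
the real axis tends to zero: it is the Poisson integral of `φ ν`, up to a constant. -/
lemma tendsto_sub_conj {ν : Measure ℝ} {φ : ℝ → ℂ} (hφ : Integrable φ ν)
    (hφm : Measurable φ) {x : ℝ}
    (hL : Tendsto (fun r => (ν.withDensity fun t => (‖φ t‖₊ : ENNReal)) (closedBall x r) /
      volume (closedBall x r)) (𝓝[>] 0) (𝓝 0)) :
    Tendsto (fun z : ℂ => (∫ t : ℝ, φ t * ((t : ℂ) - z)⁻¹ ∂ν) -
      ∫ t : ℝ, φ t * ((t : ℂ) - conj z)⁻¹ ∂ν) (𝓝[cone x] (x : ℂ)) (𝓝 0) := by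
  have hfin : IsFiniteMeasure (ν.withDensity fun t => (‖φ t‖₊ : ENNReal)) :=
    isFiniteMeasure_withDensity hφ.2.ne
  rw [tendsto_zero_iff_norm_tendsto_zero, Metric.tendsto_nhds]
  intro ε hε
  filter_upwards [eventually_poisson_le _ hL (C := ε / 27) (by positivity) (by simpa using hε),
    self_mem_nhdsWithin] with z hz hzc
  have hz0 : z.im ≠ 0 := hzc.1.ne'
  have hz0' : (conj z).im ≠ 0 := by simpa using hz0
  rw [integral_withDensity_eq_integral_smul hφm.nnnorm] at hz
  rw [← integral_sub (integrable_mul_resolvent hφ hz0) (integrable_mul_resolvent hφ hz0'),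
    dist_zero_right, norm_norm]
  have hle : ‖∫ t : ℝ, (φ t * ((t : ℂ) - z)⁻¹ - φ t * ((t : ℂ) - conj z)⁻¹) ∂ν‖ ≤
      2 * ∫ t : ℝ, ‖φ t‖₊ • (z.im / ‖(t : ℂ) - z‖ ^ 2) ∂ν := by
    refine (norm_integral_le_integral_norm _).trans_eq ?_
    rw [← integral_const_mul]
    congr 1 with t
    have e : ((t : ℂ) - conj z)⁻¹ = conj (((t : ℂ) - z)⁻¹) := by simp
    rw [← mul_sub, e, sub_conj, im_resolvent, norm_mul, norm_mul, norm_I, norm_real,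
      Real.norm_of_nonneg (by have := hzc.1; positivity), NNReal.smul_def, coe_nnnorm]
    simp
    ring
  linarith

lemma ae_tendsto_withDensity_of_eq_zero {ν : Measure ℝ} [IsFiniteMeasure ν] {φ : ℝ → ℂ}
    (hφ : Integrable φ ν) (hφm : Measurable φ) :
    ∀ᵐ x, φ x = 0 →
      Tendsto (fun r => (ν.withDensity fun t => (‖φ t‖₊ : ENNReal)) (closedBall x r) /
        volume (closedBall x r)) (𝓝[>] 0) (𝓝 0) := by
  have hfin : IsFiniteMeasure (ν.withDensity fun t => (‖φ t‖₊ : ENNReal)) :=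
    isFiniteMeasure_withDensity hφ.2.ne
  filter_upwards [Besicovitch.ae_tendsto_rnDeriv (ν.withDensity fun t => (‖φ t‖₊ : ENNReal)) volume,
    Measure.rnDeriv_withDensity_left (μ := ν) (ν := volume) (f := fun t => (‖φ t‖₊ : ENNReal))
      hφm.nnnorm.coe_nnreal_ennreal.aemeasurable (by simp)] with x h1 h2 h3
  rw [h2, h3] at h1
  simpa using h1

/-- The complex version of `ae_eq_zero_of_cone_limits`. Both limits enter: a vanishing jump transfers
the limit `0` from `φ ν` to `conj φ ν`, hence to the real and imaginary parts of `φ`. -/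
lemma ae_eq_zero_of_tendsto {ν : Measure ℝ} {φ : ℝ → ℂ} (hφ : Integrable φ ν)
    {E : Set ℝ} (hE : volume E ≠ 0)
    (hK : ∀ x ∈ E, Tendsto (fun z : ℂ => ∫ t : ℝ, φ t * ((t : ℂ) - z)⁻¹ ∂ν)
      (𝓝[cone x] (x : ℂ)) (𝓝 0))
    (hD : ∀ x ∈ E, Tendsto (fun z : ℂ => (∫ t : ℝ, φ t * ((t : ℂ) - z)⁻¹ ∂ν) -
      ∫ t : ℝ, φ t * ((t : ℂ) - conj z)⁻¹ ∂ν) (𝓝[cone x] (x : ℂ)) (𝓝 0)) :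
    φ =ᵐ[ν] 0 := by
  have hconj : ∀ z : ℂ, conj (∫ t : ℝ, φ t * ((t : ℂ) - conj z)⁻¹ ∂ν) =
      ∫ t : ℝ, conj (φ t) * ((t : ℂ) - z)⁻¹ ∂ν := by
    intro z
    rw [← integral_conj]
    simp
  have hφc : Integrable (fun t => conj (φ t)) ν := by
    simpa using (conjLIE.toContinuousLinearEquiv.toContinuousLinearMap.integrable_comp hφ)
  have hK' : ∀ x ∈ E, Tendsto (fun z : ℂ => ∫ t : ℝ, conj (φ t) * ((t : ℂ) - z)⁻¹ ∂ν)
      (𝓝[cone x] (x : ℂ)) (𝓝 0) := by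
    intro x hx
    have h1 := (continuous_conj.tendsto _).comp ((hK x hx).sub (hD x hx))
    simp only [sub_sub_cancel, sub_zero, map_zero] at h1
    refine h1.congr fun z => ?_
    exact hconj z
  have hre : (fun t => (φ t).re) =ᵐ[ν] 0 := by
    refine ae_eq_zero_of_cone_limits hφ.re hE fun x hx => ?_
    have h1 := ((hK x hx).add (hK' x hx)).div_const 2
    simp only [add_zero, zero_div] at h1
    refine h1.congr' ?_
    filter_upwards [self_mem_nhdsWithin] with z hz
    have hz : z.im ≠ 0 := hz.1.ne'
    rw [← integral_add (integrable_mul_resolvent hφ hz) (integrable_mul_resolvent hφc hz),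
      ← integral_div]
    congr 1 with t
    rw [← add_mul, add_conj]
    simp
    ring
  have him : (fun t => (φ t).im) =ᵐ[ν] 0 := by
    refine ae_eq_zero_of_cone_limits hφ.im hE fun x hx => ?_
    have h1 := ((hK x hx).sub (hK' x hx)).div_const (2 * I)
    simp only [sub_zero, zero_div] at h1
    refine h1.congr' ?_
    filter_upwards [self_mem_nhdsWithin] with z hz
    have hz : z.im ≠ 0 := hz.1.ne'
    rw [← integral_sub (integrable_mul_resolvent hφ hz) (integrable_mul_resolvent hφc hz),
      ← integral_div]
    congr 1 with t
    rw [← sub_mul, sub_conj]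
    have := I_ne_zero
    simp
    field_simp
  filter_upwards [hre, him] with t h1 h2
  exact Complex.ext h1 h2

end Auxiliary

open Filter Topology Metric

/-- **Theorem (rank-one perturbations, absolutely continuous part).**
Let `μ` be a finite compactly supported positive Borel measure on `ℝ`, let
`A α = M_t + α(·,1)1` on `L²(μ)`, let `μm α` be the spectral measure of `A α`
with respect to the constant function `one = 1` (characterized by the resolvent
identity `hres`), and let `V α : L²(μ) → L²(μ_α)` be the spectral representation
(`V α ∘ A α = M_t ∘ V α`, `V α 1 = 1`).  Then for any `0 ≠ f ∈ L²(μ)`, the set of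
`α ∈ ℝ` for which `V α f` vanishes on a set of positive `(μ_α)_ac`-measure is
countable. -/
theorem cyclic_ac_part_all_but_countably_many
    {μ : Measure ℝ} [IsFiniteMeasure μ]
    (hsupp : ∃ K : Set ℝ, IsCompact K ∧ μ Kᶜ = 0)
    (one : Lp ℂ 2 μ) (hone : (one : ℝ → ℂ) =ᵐ[μ] fun _ => 1)
    (A : ℝ → (Lp ℂ 2 μ →L[ℂ] Lp ℂ 2 μ))
    (hA : ∀ (α : ℝ) (g : Lp ℂ 2 μ),
      (A α g : ℝ → ℂ) =ᵐ[μ] fun t => t * g t + (α : ℂ) * ⟪one, g⟫)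
    (μm : ℝ → Measure ℝ)
    (hμm_fin : ∀ α, IsFiniteMeasure (μm α))
    (hμm0 : μm 0 = μ)
    (hres : ∀ (α : ℝ) (z : ℂ), z.im ≠ 0 → ∀ g : Lp ℂ 2 μ,
      A α g - z • g = one → ⟪one, g⟫ = ∫ t, ((t : ℂ) - z)⁻¹ ∂(μm α))
    (V : ∀ α : ℝ, Lp ℂ 2 μ ≃ₗᵢ[ℂ] Lp ℂ 2 (μm α))
    (hV : ∀ (α : ℝ) (g : Lp ℂ 2 μ),
      (V α (A α g) : ℝ → ℂ) =ᵐ[μm α] fun t => t * (V α g) t)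
    (hV1 : ∀ α : ℝ, (V α one : ℝ → ℂ) =ᵐ[μm α] fun _ => 1)
    (f : Lp ℂ 2 μ) (hf : f ≠ 0) :
    Set.Countable {α : ℝ |
      0 < (volume.withDensity ((μm α).rnDeriv volume))
        {t : ℝ | (V α f : ℝ → ℂ) t = 0}} := by
  set B : ℝ → Set ℝ := fun α =>
    {t | (μm α).rnDeriv volume t ≠ 0} ∩ {t : ℝ | (V α f : ℝ → ℂ) t = 0} with hB
  have hmeas : ∀ α, Measurable (V α f : ℝ → ℂ) := fun α => (Lp.stronglyMeasurable _).measurable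
  have hBm : ∀ α, MeasurableSet (B α) := fun α =>
    ((measurableSet_singleton 0).compl.preimage (Measure.measurable_rnDeriv _ _)).inter
      ((measurableSet_singleton 0).preimage (hmeas α))
  have hset : {α : ℝ | 0 < (volume.withDensity ((μm α).rnDeriv volume))
        {t : ℝ | (V α f : ℝ → ℂ) t = 0}} = {α | 0 < volume (B α)} := by
    ext α
    rw [mem_ofPred_eq, mem_ofPred_eq, pos_iff_ne_zero, pos_iff_ne_zero, Ne, Ne,
      withDensity_apply_eq_zero (Measure.measurable_rnDeriv _ _)]
  rw [hset]
  -- In the σ-finite measure space `ℝ`, almost everywhere disjoint sets of positive measure form a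
  -- countable family.
  refine Measure.countable_meas_pos_of_disjoint_iUnion₀ (fun α => (hBm α).nullMeasurableSet) ?_
  intro α β hαβ
  by_contra hpos
  have hpos : volume (B α ∩ B β) ≠ 0 := hpos
  have hint : ∀ γ, Integrable (V γ f : ℝ → ℂ) (μm γ) := fun γ =>
    have := hμm_fin γ
    integrable_coe_Lp _
  -- `P γ x`: differentiation of `μm γ` and `|V γ f| μm γ` with respect to Lebesgue measure works
  -- at `x`.
  set P : ℝ → ℝ → Prop := fun γ x => (V γ f x = 0 →
      Tendsto (fun r => ((μm γ).withDensity fun t => (‖V γ f t‖₊ : ENNReal)) (closedBall x r) /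
        volume (closedBall x r)) (𝓝[>] 0) (𝓝 0)) ∧
      Tendsto (fun r => μm γ (closedBall x r) / volume (closedBall x r)) (𝓝[>] 0)
        (𝓝 ((μm γ).rnDeriv volume x)) ∧ (μm γ).rnDeriv volume x < ⊤ with hP
  have hgood : ∀ γ, ∀ᵐ x, P γ x := by
    intro γ
    have := hμm_fin γ
    filter_upwards [ae_tendsto_withDensity_of_eq_zero (hint γ) (hmeas γ),
      Besicovitch.ae_tendsto_rnDeriv (μm γ) volume, Measure.rnDeriv_lt_top (μm γ) volume]
      with x h1 h2 h3 using ⟨h1, h2, h3⟩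
  set E := (B α ∩ B β) ∩ {x | P α x ∧ P β x} with hEdef
  have hE : volume E ≠ 0 := by
    rwa [hEdef, measure_inter_conull (t := {x | P α x ∧ P β x})
      (ae_iff.1 ((hgood α).and (hgood β)))]
  have := hμm_fin α
  have := hμm_fin β
  have hDα : ∀ x ∈ E, _ := fun x hx =>
    tendsto_sub_conj (hint α) (hmeas α) (hx.2.1.1 hx.1.1.2)
  have hDβ : ∀ x ∈ E, _ := fun x hx =>
    tendsto_sub_conj (hint β) (hmeas β) (hx.2.2.1 hx.1.2.2)
  have hzero : (V α f : ℝ → ℂ) =ᵐ[μm α] 0 := by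
    refine ae_eq_zero_of_tendsto (hint α) hE (fun x hx => ?_) hDα
    obtain ⟨c₁, hc₁, h₁⟩ := eventually_le_poisson (μm α) hx.2.1.2.1 hx.1.1.1
    obtain ⟨c₂, hc₂, h₂⟩ := eventually_le_poisson (μm β) hx.2.2.2.1 hx.1.2.1
    set C := ((μm α).rnDeriv volume x).toReal + 1 with hC
    have hLC : (μm α).rnDeriv volume x < ENNReal.ofReal C := by
      rw [ENNReal.lt_ofReal_iff_toReal_lt hx.2.1.2.2.ne]
      exact lt_add_one _
    have h₃ := eventually_poisson_le (μm α) hx.2.1.2.1 (C := C) (by positivity) hLC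
    refine tendsto_zero_of_identities (δ := β - α) (sub_ne_zero.2 hαβ.symm)
      (F₁ := stieltjes (μm α)) (F₂ := stieltjes (μm β))
      (K₂ := fun z => ∫ t : ℝ, V β f t * ((t : ℂ) - z)⁻¹ ∂(μm β))
      (fun z hz => stieltjes_perturbation hone hA hμm_fin hV hV1 α β hz)
      (fun z hz => integral_resolvent_perturbation hone hA hμm_fin hV hV1 f α β hz)
      (stieltjes_conj _) (c := min c₁ c₂) (C := 13 * C) (lt_min hc₁ hc₂) ?_ ?_ ?_
      (hDα x hx) (hDβ x hx)
    · filter_upwards [h₁, self_mem_nhdsWithin] with z hz hzc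
      rw [stieltjes_im _ hzc.1.ne']
      exact (min_le_left _ _).trans hz
    · filter_upwards [h₃, self_mem_nhdsWithin] with z hz hzc
      rwa [stieltjes_im _ hzc.1.ne']
    · filter_upwards [h₂, self_mem_nhdsWithin] with z hz hzc
      rw [stieltjes_im _ hzc.1.ne']
      exact (min_le_right _ _).trans hz
  refine hf ((V α).injective ?_)
  rw [map_zero]
  exact (Lp.eq_zero_iff_ae_eq_zero).2 hzero
end

section
/- (Aronszajn–Krein-type formula, first identity.) For every f ∈ L²(μ), all α, β ∈ ℝ, and every z ∈ ℂ∖ℝ, one has (1 + (α − β)·𝒦_{μ_β}(z))·𝒦_{f_α μ_α}(z) = 𝒦_{f_β μ_β}(z), where f_α = V_α f and f_β = V_β f. -/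
/-!
Put `w = conj z` and let `u_γ = (A_γ - w)⁻¹ 1`. In the spectral representation `V_γ` the vector `u_γ`
is the function `(t - w)⁻¹`, so `⟪u_γ, f⟫ = ∫ f_γ(t) (t - z)⁻¹ dμ_γ(t)` for every `f`: the Cauchy
transforms in the theorem are all inner products against `u_α` or `u_β`
(`exists_resolvent_vector`). Since `A_α - A_β` is the rank one operator `(α - β)⟪1, ·⟫ 1`,
`(A_α - w) u_β = (1 + (α - β)⟪1, u_β⟫) 1`, and hence `u_β = (1 + (α - β)⟪1, u_β⟫) u_α`.
Pairing this with `f` gives the identity.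
-/

open MeasureTheory Complex Set

local notation "⟪" x ", " y "⟫" => @inner ℂ _ _ x y

lemma ofReal_sub_ne_zero {w : ℂ} (hw : w.im ≠ 0) (t : ℝ) : (t : ℂ) - w ≠ 0 := by
  intro h
  apply hw
  have := congrArg Complex.im h
  simpa using this

lemma memLp_inv_ofReal_sub {ν : Measure ℝ} [IsFiniteMeasure ν] {w : ℂ} (hw : w.im ≠ 0) :
    MemLp (fun t : ℝ => ((t : ℂ) - w)⁻¹) 2 ν := by
  have hc : Continuous fun t : ℝ => ((t : ℂ) - w)⁻¹ :=
    (Complex.continuous_ofReal.sub continuous_const).inv₀ (ofReal_sub_ne_zero hw)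
  refine MemLp.of_bound hc.aestronglyMeasurable |w.im|⁻¹ (Filter.Eventually.of_forall fun t => ?_)
  rw [norm_inv]
  refine inv_anti₀ (abs_pos.mpr hw) ?_
  simpa using Complex.abs_im_le_norm ((t : ℂ) - w)

/-- If `V` carries `T` to multiplication by `t` on `L²(ν)` and the vector `e` to the constant
function one, then `u = V⁻¹ (t - conj z)⁻¹` is the resolvent vector `(T - conj z)⁻¹ e`. The first
conclusion says that `c • u` is the unique solution of `(T - conj z) g = c • e`, the second that
pairing with `u` is a Cauchy transform. -/
lemma exists_resolvent_vector {H : Type*} [NormedAddCommGroup H] [InnerProductSpace ℂ H]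
    {ν : Measure ℝ} [IsFiniteMeasure ν] (T : H →L[ℂ] H) (e : H) (V : H ≃ₗᵢ[ℂ] Lp ℂ 2 ν)
    (hV : ∀ g : H, (V (T g) : ℝ → ℂ) =ᵐ[ν] fun t => t * (V g) t)
    (hV1 : (V e : ℝ → ℂ) =ᵐ[ν] fun _ => 1) {z : ℂ} (hz : z.im ≠ 0) :
    ∃ u : H, (∀ (c : ℂ) (g : H), T g - (starRingEnd ℂ z) • g = c • e ↔ g = c • u) ∧
      ∀ g : H, ⟪u, g⟫ = ∫ t, (V g : ℝ → ℂ) t * ((t : ℂ) - z)⁻¹ ∂ν := by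
  have hw : (starRingEnd ℂ z).im ≠ 0 := by simpa using hz
  have hmem : MemLp (fun t : ℝ => ((t : ℂ) - starRingEnd ℂ z)⁻¹) 2 ν := memLp_inv_ofReal_sub hw
  refine ⟨V.symm hmem.toLp, fun c g => ?_, fun g => ?_⟩
  · rw [← V.injective.eq_iff, ← V.injective.eq_iff (a := g)]
    simp only [map_sub, map_smul, LinearIsometryEquiv.apply_symm_apply]
    rw [Lp.ext_iff, Lp.ext_iff]
    refine Filter.eventually_congr ?_
    filter_upwards [hV g, hV1, hmem.coeFn_toLp, Lp.coeFn_sub (V (T g)) (starRingEnd ℂ z • V g),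
      Lp.coeFn_smul (starRingEnd ℂ z) (V g), Lp.coeFn_smul c (V e),
      Lp.coeFn_smul c hmem.toLp] with t h1 h2 h3 h4 h5 h6 h7
    rw [h4, h6, h7]
    simp only [Pi.sub_apply, Pi.smul_apply, smul_eq_mul, h1, h2, h3, h5]
    rw [← div_eq_mul_inv, eq_div_iff (ofReal_sub_ne_zero hw t)]
    constructor <;> intro h <;> linear_combination h
  · rw [← V.inner_map_map, V.apply_symm_apply, MeasureTheory.L2.inner_def]
    refine integral_congr_ae ?_
    filter_upwards [hmem.coeFn_toLp] with t ht
    rw [ht]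
    simp

/-- **Aronszajn–Krein-type formula, first identity.**
For every `f ∈ L²(μ)`, all `α, β ∈ ℝ` and nonreal `z`,
`(1 + (α − β)·𝒦_{μ_β}(z))·𝒦_{f_α μ_α}(z) = 𝒦_{f_β μ_β}(z)`,
where `𝒦_{gτ}(z) = ∫ g(t)(t − z)⁻¹ dτ(t)` and `𝒦_τ(z) = ∫ (t − z)⁻¹ dτ(t)`. -/
theorem aronszajn_krein_first_identity
{μ : Measure ℝ} [IsFiniteMeasure μ]
    (hsupp : ∃ K : Set ℝ, IsCompact K ∧ μ Kᶜ = 0)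
    (one : Lp ℂ 2 μ) (hone : (one : ℝ → ℂ) =ᵐ[μ] fun _ => 1)
    (A : ℝ → (Lp ℂ 2 μ →L[ℂ] Lp ℂ 2 μ))
    (hA : ∀ (α : ℝ) (g : Lp ℂ 2 μ),
      (A α g : ℝ → ℂ) =ᵐ[μ] fun t => t * g t + (α : ℂ) * ⟪one, g⟫)
    (μm : ℝ → Measure ℝ)
    (hμm_fin : ∀ α, IsFiniteMeasure (μm α))
    (hμm0 : μm 0 = μ)
    (hres : ∀ (α : ℝ) (z : ℂ), z.im ≠ 0 → ∀ g : Lp ℂ 2 μ,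
      A α g - z • g = one → ⟪one, g⟫ = ∫ t, ((t : ℂ) - z)⁻¹ ∂(μm α))
    (V : ∀ α : ℝ, Lp ℂ 2 μ ≃ₗᵢ[ℂ] Lp ℂ 2 (μm α))
    (hV : ∀ (α : ℝ) (g : Lp ℂ 2 μ),
      (V α (A α g) : ℝ → ℂ) =ᵐ[μm α] fun t => t * (V α g) t)
    (hV1 : ∀ α : ℝ, (V α one : ℝ → ℂ) =ᵐ[μm α] fun _ => 1)
    (f : Lp ℂ 2 μ) (α β : ℝ) (z : ℂ) (hz : z.im ≠ 0) :
    (1 + ((α : ℂ) - (β : ℂ)) * ∫ t, ((t : ℂ) - z)⁻¹ ∂(μm β)) *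
        (∫ t, (V α f : ℝ → ℂ) t * ((t : ℂ) - z)⁻¹ ∂(μm α))
      = ∫ t, (V β f : ℝ → ℂ) t * ((t : ℂ) - z)⁻¹ ∂(μm β) := by
  have := hμm_fin α
  have := hμm_fin β
  obtain ⟨u, hu, hu'⟩ := exists_resolvent_vector (A α) one (V α) (hV α) (hV1 α) hz
  obtain ⟨v, hv, hv'⟩ := exists_resolvent_vector (A β) one (V β) (hV β) (hV1 β) hz
  have hv1 : A β v - (starRingEnd ℂ z) • v = one := by
    simpa using (hv 1 v).mpr (one_smul ℂ v).symm
  have hrank : A α v = A β v + (((α : ℂ) - β) * ⟪one, v⟫) • one := by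
    rw [Lp.ext_iff]
    filter_upwards [hA α v, hA β v, hone, Lp.coeFn_add (A β v) ((((α : ℂ) - β) * ⟪one, v⟫) • one),
      Lp.coeFn_smul (((α : ℂ) - β) * ⟪one, v⟫) one] with t h1 h2 h3 h4 h5
    rw [h4, Pi.add_apply, h5, Pi.smul_apply, h1, h2, h3, smul_eq_mul]
    ring
  have hvu : v = (1 + ((α : ℂ) - β) * ⟪one, v⟫) • u := by
    rw [← hu, hrank, add_smul, one_smul, ← hv1]
    abel
  have hK : ⟪v, one⟫ = ∫ t, ((t : ℂ) - z)⁻¹ ∂(μm β) := by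
    rw [hv']
    refine integral_congr_ae ?_
    filter_upwards [hV1 β] with t ht
    rw [ht, one_mul]
  rw [← hu', ← hv', ← hK]
  conv_rhs => rw [hvu, inner_smul_left]
  simp
end
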